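/- There exist a constant c > 0 and n₀ such that for all n ≥ n₀, the number of sumsets in F₂ⁿ that do not contain any linear subspace of co-dimension 1 satisfies |𝒮ₙ \ ℋₙ| ≤ 2^(2^(n−1) − 2^(n/2 − c·√n)). In particular, |𝒮ₙ \ ℋₙ| = o(|𝒮ₙ|). -/

import Mathlib

open Pointwise

/-- `V n` is the vector space `F₂ⁿ`. -/
abbrev V (n : ℕ) : Type := Fin n → ZMod 2

/-- `𝒮ₙ`: the family of sumsets `A + A` for `A ⊆ F₂ⁿ`. -/
def sumsets (n : ℕ) : Finset (Finset (V n)) :=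
  Finset.image (fun A : Finset (V n) => A + A) Finset.univ

/-- `v^⊥ = {x : ⟨x, v⟩ = 0}`. -/
def perp {n : ℕ} (v : V n) : Finset (V n) :=
  Finset.univ.filter (fun x => ∑ i, x i * v i = 0)

/-- `ℋₙ`: subsets of `F₂ⁿ` containing a complete linear subspace of co-dimension 1. -/
def Hfam (n : ℕ) : Finset (Finset (V n)) :=
  Finset.univ.filter (fun S => ∃ v : V n, v ≠ 0 ∧ perp v ⊆ S)

/-!
A Fourier argument puts every `A ⊆ F₂ⁿ`, up to few elements, inside a union `F` of cosets of a
subspace of bounded codimension, in such a way that almost all the popular sums of `F`, those with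
many representations as a sum of two elements of `F`, lie in `A + A`. There are only `2 ^ O(n)` such
containers `F`.

If `F` has notably fewer than `2 ^ (n - 1)` elements, there are few choices for `A`; if `F` has
notably more than `2 ^ (n - 1)` popular sums, there are few choices for the complement of `A + A`.
Otherwise `F` is too large for its few popular sums, unless a nontrivial character correlates with
`F` almost perfectly: this follows from the Fourier expansion of the additive energy of `F`. Hence
`A` is nearly contained in a coset of a hyperplane `v^⊥`. If `A + A` misses some `h ∈ v^⊥`, then `A`
contains at most one point of each of the `2 ^ (n - 2)` pairs `{x, x + h}` in that coset, leaving
about `3 ^ (2 ^ (n - 2))` choices. In total this saves a factor `2 ^ (δ * 2 ^ n)` over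
`2 ^ (2 ^ (n - 1))`, which is a lower bound for the number of sumsets: each subset `T` of the
complement of a hyperplane can be read off from the sumset of `T ∪ {0}`.
-/

open Finset ComplexConjugate

section FourierTransform

variable {G : Type*} [AddCommGroup G] [Fintype G]

/-- The unnormalised Fourier transform of `f` on a finite abelian group; the sum is not conjugated,
so that the indicator function of a set is paired with the characters themselves. -/
def dft (f : G → ℂ) (ψ : AddChar G ℂ) : ℂ := ∑ x, f x * ψ x

/-- The unnormalised convolution of two functions on a finite abelian group. -/
def conv {R : Type*} [Semiring R] (f g : G → R) (x : G) : R := ∑ y, f y * g (x - y)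

/-- The real-valued indicator function of a finite set. -/
noncomputable abbrev ind {α : Type*} (A : Finset α) : α → ℝ := Set.indicator A 1

theorem sum_ind {α : Type*} [Fintype α] (A : Finset α) : ∑ x, ind A x = #A := by
  classical simp [Set.indicator_apply]

theorem sum_ind_sq {α : Type*} [Fintype α] (A : Finset α) : ∑ x, ind A x ^ 2 = #A := by
  classical simp [Set.indicator_apply, ite_pow]

theorem ind_nonneg {α : Type*} (A : Finset α) (x : α) : 0 ≤ ind A x :=
  Set.indicator_nonneg (fun _ _ ↦ zero_le_one) x

theorem dft_zero_right (f : G → ℂ) : dft f 0 = ∑ x, f x := by simp [dft]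

theorem dft_sub (f g : G → ℂ) (ψ : AddChar G ℂ) :
    dft (fun x ↦ f x - g x) ψ = dft f ψ - dft g ψ := by
  simp [dft, sub_mul]

theorem dft_conv (f g : G → ℂ) (ψ : AddChar G ℂ) : dft (conv f g) ψ = dft f ψ * dft g ψ := by
  simp only [dft, conv, sum_mul]
  rw [sum_comm]
  refine sum_congr rfl fun y _ ↦ ?_
  rw [mul_sum]
  refine Fintype.sum_equiv (Equiv.subRight y) _ _ fun x ↦ ?_
  have hψ : ψ x = ψ y * ψ (x - y) := by rw [← AddChar.map_add_eq_mul, add_sub_cancel]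
  rw [hψ, Equiv.subRight_apply]
  ring

theorem conv_ofReal (f g : G → ℝ) :
    (fun x ↦ ((conv f g x : ℝ) : ℂ)) = conv (fun x ↦ (f x : ℂ)) (fun x ↦ (g x : ℂ)) := by
  ext x
  simp [conv]

theorem conv_nonneg {f g : G → ℝ} (hf : ∀ x, 0 ≤ f x) (hg : ∀ x, 0 ≤ g x) (x : G) :
    0 ≤ conv f g x :=
  sum_nonneg fun y _ ↦ mul_nonneg (hf y) (hg (x - y))

theorem conv_ind_of_notMem_add [DecidableEq G] {A B : Finset G} {x : G} (hx : x ∉ A + B) :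
    conv (ind A) (ind B) x = 0 := by
  refine sum_eq_zero fun y _ ↦ ?_
  by_contra hne
  have hy : y ∈ A ∧ x - y ∈ B := by simpa [Set.indicator_apply, and_comm] using hne
  exact hx (mem_add.2 ⟨y, hy.1, x - y, hy.2, add_sub_cancel y x⟩)

theorem sum_conv (f g : G → ℝ) : ∑ x, conv f g x = (∑ x, f x) * ∑ x, g x := by
  simp only [conv, sum_mul]
  rw [sum_comm]
  refine sum_congr rfl fun y _ ↦ ?_
  rw [← mul_sum]
  exact congrArg _ ((Equiv.subRight y).sum_comp g)

theorem sum_norm_sq_dft (f : G → ℂ) :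
    ∑ ψ, ‖dft f ψ‖ ^ 2 = Fintype.card G * ∑ x, ‖f x‖ ^ 2 := by
  classical
  have hexpand (ψ : AddChar G ℂ) :
      (‖dft f ψ‖ ^ 2 : ℂ) = ∑ x, ∑ y, f x * conj (f y) * ψ (x - y) := by
    rw [← Complex.mul_conj', dft, map_sum, sum_mul_sum]
    refine sum_congr rfl fun x _ ↦ sum_congr rfl fun y _ ↦ ?_
    rw [map_mul, sub_eq_add_neg, AddChar.map_add_eq_mul, AddChar.map_neg_eq_conj]
    ring
  have hdiag (x : G) : ∑ ψ : AddChar G ℂ, ∑ y, f x * conj (f y) * ψ (x - y) =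
      Fintype.card G * ‖f x‖ ^ 2 := by
    rw [sum_comm]
    simp only [← mul_sum, AddChar.sum_apply_eq_ite, sub_eq_zero, mul_ite, mul_zero,
      sum_ite_eq, mem_univ, if_true, Complex.mul_conj']
    ring
  have hcomplex : (∑ ψ, ‖dft f ψ‖ ^ 2 : ℂ) = Fintype.card G * ∑ x, (‖f x‖ : ℂ) ^ 2 := by
    simp only [hexpand]
    rw [sum_comm, mul_sum]
    exact sum_congr rfl fun x _ ↦ hdiag x
  exact_mod_cast hcomplex

theorem sum_norm_sq_dft_ofReal (f : G → ℝ) :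
    ∑ ψ, ‖dft (fun x ↦ (f x : ℂ)) ψ‖ ^ 2 = Fintype.card G * ∑ x, f x ^ 2 := by
  simp [sum_norm_sq_dft]

theorem sum_norm_sq_dft_ind (A : Finset G) :
    ∑ ψ, ‖dft (fun x ↦ (ind A x : ℂ)) ψ‖ ^ 2 = Fintype.card G * #A := by
  rw [sum_norm_sq_dft_ofReal, sum_ind_sq]

end FourierTransform

section Subgroup

variable {G : Type*} [AddCommGroup G]

/-- The uniform probability density on a subgroup `W`; `conv f (subgroupDensity W) x` is the mean
of `f` over the coset `x + W`. -/
noncomputable def subgroupDensity (W : AddSubgroup G) : G → ℝ :=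
  Set.indicator W fun _ ↦ (Nat.card W : ℝ)⁻¹

theorem subgroupDensity_nonneg (W : AddSubgroup G) (x : G) : 0 ≤ subgroupDensity W x :=
  Set.indicator_nonneg (fun _ _ ↦ by positivity) x

/-- The joint kernel of a family of characters. -/
def annihilator {ι : Type*} (ψ : ι → AddChar G ℂ) : AddSubgroup G :=
  ⨅ i, (ψ i).toAddMonoidHom.ker

theorem mem_annihilator {ι : Type*} {ψ : ι → AddChar G ℂ} {x : G} :
    x ∈ annihilator ψ ↔ ∀ i, ψ i x = 1 := by
  simp [annihilator, AddSubgroup.mem_iInf, AddMonoidHom.mem_ker]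

variable [Fintype G]

theorem dft_subgroupDensity (W : AddSubgroup G) (ψ : AddChar G ℂ)
    [Decidable (∀ w ∈ W, ψ w = 1)] :
    dft (fun x ↦ (subgroupDensity W x : ℂ)) ψ = if ∀ w ∈ W, ψ w = 1 then 1 else 0 := by
  classical
  have hrestrict : dft (fun x ↦ (subgroupDensity W x : ℂ)) ψ =
      (Nat.card W : ℂ)⁻¹ * ∑ w : W, ψ.compAddMonoidHom W.subtype w := by
    have hsum : ∑ w : W, ψ w = ∑ x with x ∈ W, ψ x := (sum_subtype _ (by simp) _).symm
    simp only [dft, subgroupDensity, AddChar.compAddMonoidHom_apply, AddSubgroup.subtype_apply,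
      hsum, sum_filter, mul_sum]
    refine sum_congr rfl fun x _ ↦ ?_
    by_cases hx : x ∈ W <;> simp [hx]
  have htrivial : ψ.compAddMonoidHom W.subtype = 0 ↔ ∀ w ∈ W, ψ w = 1 := by
    simp [AddChar.ext_iff]
  rw [hrestrict, AddChar.sum_eq_ite, ← Nat.card_eq_fintype_card]
  simp [htrivial]

theorem sum_subgroupDensity (W : AddSubgroup G) : ∑ x, subgroupDensity W x = 1 := by
  classical
  have h := dft_subgroupDensity W 0
  rw [dft_zero_right] at h
  exact_mod_cast h.trans (if_pos fun w _ ↦ AddChar.zero_apply w)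

theorem conv_subgroupDensity_add (W : AddSubgroup G) (f : G → ℝ) {w : G} (hw : w ∈ W) (x : G) :
    conv f (subgroupDensity W) (x + w) = conv f (subgroupDensity W) x := by
  refine sum_congr rfl fun y _ ↦ ?_
  have : x + w - y ∈ W ↔ x - y ∈ W := by
    rw [add_sub_right_comm, W.add_mem_cancel_right hw]
  classical simp [subgroupDensity, Set.indicator_apply, this]

/-- Averaging over the cosets of `W` is self-adjoint and fixes `W`-periodic functions. -/
theorem sum_conv_subgroupDensity_mul (W : AddSubgroup G) (f g : G → ℝ)
    (hg : ∀ w ∈ W, ∀ x, g (x + w) = g x) :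
    ∑ x, conv f (subgroupDensity W) x * g x = ∑ x, f x * g x := by
  have hterm (x y : G) : f y * subgroupDensity W (x - y) * g x =
      f y * g y * subgroupDensity W (x - y) := by
    by_cases hxy : x - y ∈ W
    · have : g x = g y := by rw [← hg _ hxy y, add_sub_cancel]
      rw [this]
      ring
    · simp [subgroupDensity, hxy]
  simp only [conv, sum_mul, hterm]
  rw [sum_comm]
  refine sum_congr rfl fun y _ ↦ ?_
  have hshift : ∑ x, subgroupDensity W (x - y) = ∑ x, subgroupDensity W x :=
    (Equiv.subRight y).sum_comp (subgroupDensity W)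
  rw [← mul_sum, hshift, sum_subgroupDensity, mul_one]

end Subgroup

section Container

variable {G : Type*} [AddCommGroup G] [Fintype G]

theorem sum_sq_conv_self_sub_conv_self_le (W : AddSubgroup G) (f : G → ℝ) {δ : ℝ} (hδ : 0 ≤ δ)
    (hf : ∀ ψ : AddChar G ℂ, (∀ w ∈ W, ψ w = 1) ∨ ‖dft (fun x ↦ (f x : ℂ)) ψ‖ ^ 2 ≤ δ) :
    ∑ x, (conv f f x -
      conv (conv f (subgroupDensity W)) (conv f (subgroupDensity W)) x) ^ 2 ≤
        δ * ∑ x, f x ^ 2 := by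
  classical
  set g : G → ℝ := conv f (subgroupDensity W)
  have hdft (ψ : AddChar G ℂ) : dft (fun x ↦ ((conv f f x - conv g g x : ℝ) : ℂ)) ψ =
      dft (fun x ↦ (f x : ℂ)) ψ ^ 2 * if ∀ w ∈ W, ψ w = 1 then 0 else 1 := by
    simp only [Complex.ofReal_sub, dft_sub, conv_ofReal, dft_conv, g, dft_subgroupDensity]
    split_ifs <;> ring
  have hbound (ψ : AddChar G ℂ) : ‖dft (fun x ↦ ((conv f f x - conv g g x : ℝ) : ℂ)) ψ‖ ^ 2 ≤
      δ * ‖dft (fun x ↦ (f x : ℂ)) ψ‖ ^ 2 := by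
    rw [hdft]
    split_ifs with hψ
    · simpa using by positivity
    · rw [mul_one, norm_pow, sq (‖_‖ ^ 2)]
      exact mul_le_mul_of_nonneg_right ((hf ψ).resolve_left hψ) (by positivity)
  refine le_of_mul_le_mul_left ?_ (Nat.cast_pos.2 (Fintype.card_pos (α := G)) : (0 : ℝ) < _)
  calc _ = ∑ ψ, ‖dft (fun x ↦ ((conv f f x - conv g g x : ℝ) : ℂ)) ψ‖ ^ 2 :=
        (sum_norm_sq_dft_ofReal _).symm
    _ ≤ ∑ ψ, δ * ‖dft (fun x ↦ (f x : ℂ)) ψ‖ ^ 2 := sum_le_sum fun ψ _ ↦ hbound ψ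
    _ = _ := by rw [← mul_sum, sum_norm_sq_dft_ofReal, mul_left_comm]

/-- The elements with at least `e * #G` representations as a sum of two elements of `F`. -/
noncomputable def popularSums (e : ℝ) (F : Finset G) : Finset G :=
  {x | e * Fintype.card G ≤ conv (ind F) (ind F) x}

theorem mem_popularSums {e : ℝ} {F : Finset G} {x : G} :
    x ∈ popularSums e F ↔ e * Fintype.card G ≤ conv (ind F) (ind F) x := by
  simp [popularSums]

theorem le_conv_self_of_mem_popularSums {e : ℝ} (he : 0 ≤ e) {F : Finset G} {f : G → ℝ}
    (hf : ∀ x, 0 ≤ f x) (hF : ∀ x ∈ F, e ≤ f x) {x : G} (hx : x ∈ popularSums e F) :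
    e ^ 3 * Fintype.card G ≤ conv f f x := by
  have hle (y : G) : e * ind F y ≤ f y := by
    by_cases hy : y ∈ F
    · simpa [hy] using hF y hy
    · simpa [hy] using hf y
  calc e ^ 3 * Fintype.card G = e ^ 2 * (e * Fintype.card G) := by ring
    _ ≤ e ^ 2 * conv (ind F) (ind F) x := by gcongr; exact mem_popularSums.1 hx
    _ = ∑ y, e * ind F y * (e * ind F (x - y)) := by
        rw [conv, mul_sum]
        exact sum_congr rfl fun y _ ↦ by ring
    _ ≤ conv f f x := sum_le_sum fun y _ ↦
        mul_le_mul (hle y) (hle _) (mul_nonneg he (ind_nonneg F _)) (hf y)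

/-- Outside `A + A` the convolution of `A` with itself vanishes, whereas on popular sums of `F` that
of its coset averages is at least `e ^ 3 * #G`; since the two are close in `L²`, this is rare. -/
theorem card_popularSums_sdiff_add_self_le [DecidableEq G] {e : ℝ} (he : 0 < e) {A F : Finset G}
    (W : AddSubgroup G) (hF : ∀ x ∈ F, e ≤ conv (ind A) (subgroupDensity W) x)
    (hA : ∀ ψ : AddChar G ℂ, (∀ w ∈ W, ψ w = 1) ∨
      ‖dft (fun x ↦ (ind A x : ℂ)) ψ‖ ^ 2 ≤ e ^ 7 * Fintype.card G ^ 2) :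
    (#(popularSums e F \ (A + A)) : ℝ) ≤ e * Fintype.card G := by
  set f : G → ℝ := conv (ind A) (subgroupDensity W)
  have hf (x : G) : 0 ≤ f x := conv_nonneg (ind_nonneg A) (subgroupDensity_nonneg W) x
  have hlarge : ∀ x ∈ popularSums e F \ (A + A),
      (e ^ 3 * Fintype.card G) ^ 2 ≤ (conv (ind A) (ind A) x - conv f f x) ^ 2 := by
    intro x hx
    obtain ⟨hpop, hx⟩ := mem_sdiff.1 hx
    rw [conv_ind_of_notMem_add hx, zero_sub, neg_sq]
    gcongr
    exact le_conv_self_of_mem_popularSums he.le hf hF hpop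
  have hcard : (#A : ℝ) ≤ Fintype.card G := mod_cast card_le_univ A
  refine le_of_mul_le_mul_right ?_ (by positivity : 0 < (e ^ 3 * Fintype.card G) ^ 2)
  calc _ ≤ ∑ x ∈ popularSums e F \ (A + A), (conv (ind A) (ind A) x - conv f f x) ^ 2 := by
        rw [← nsmul_eq_mul]
        exact card_nsmul_le_sum _ _ _ hlarge
    _ ≤ ∑ x, (conv (ind A) (ind A) x - conv f f x) ^ 2 :=
        sum_le_univ_sum_of_nonneg fun x ↦ sq_nonneg _
    _ ≤ e ^ 7 * Fintype.card G ^ 2 * ∑ x, ind A x ^ 2 :=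
        sum_sq_conv_self_sub_conv_self_le W _ (by positivity) hA
    _ ≤ e ^ 7 * Fintype.card G ^ 2 * Fintype.card G := by rw [sum_ind_sq]; gcongr
    _ = _ := by ring

theorem card_sdiff_le_of_conv_subgroupDensity_le [DecidableEq G] {e : ℝ} {A F : Finset G}
    (he : 0 ≤ e) (W : AddSubgroup G) (hF : ∀ x ∉ F, conv (ind A) (subgroupDensity W) x ≤ e)
    (hFW : ∀ w ∈ W, ∀ x, x + w ∈ F ↔ x ∈ F) :
    (#(A \ F) : ℝ) ≤ e * Fintype.card G := by
  have hperiodic : ∀ w ∈ W, ∀ x, ind Fᶜ (x + w) = ind Fᶜ x := fun w hw x ↦ by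
    simp [Set.indicator_apply, hFW w hw x]
  calc (#(A \ F) : ℝ) = ∑ x, ind A x * ind Fᶜ x := by
        rw [← sum_ind]
        exact sum_congr rfl fun x _ ↦ by
          by_cases hA : x ∈ A <;> by_cases hF : x ∈ F <;> simp [hA, hF]
    _ = ∑ x, conv (ind A) (subgroupDensity W) x * ind Fᶜ x :=
        (sum_conv_subgroupDensity_mul W _ _ hperiodic).symm
    _ ≤ ∑ _x : G, e := sum_le_sum fun x _ ↦ by
        by_cases hx : x ∈ F
        · simpa [hx] using he
        · simpa [hx] using hF x hx
    _ = e * Fintype.card G := by simp [mul_comm]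

theorem card_mul_le_one_of_le_norm_dft_sq (A : Finset G) {δ : ℝ} {L : Finset (AddChar G ℂ)}
    (hL : ∀ ψ ∈ L, δ * Fintype.card G ^ 2 ≤ ‖dft (fun x ↦ (ind A x : ℂ)) ψ‖ ^ 2) :
    #L * δ ≤ 1 := by
  have hcard : (#A : ℝ) ≤ Fintype.card G := mod_cast card_le_univ A
  refine le_of_mul_le_mul_right ?_ (by positivity : (0 : ℝ) < Fintype.card G ^ 2)
  calc #L * δ * Fintype.card G ^ 2 ≤ ∑ ψ ∈ L, ‖dft (fun x ↦ (ind A x : ℂ)) ψ‖ ^ 2 := by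
        rw [mul_assoc, ← nsmul_eq_mul]
        exact card_nsmul_le_sum _ _ _ hL
    _ ≤ ∑ ψ, ‖dft (fun x ↦ (ind A x : ℂ)) ψ‖ ^ 2 :=
        sum_le_univ_sum_of_nonneg fun ψ ↦ sq_nonneg _
    _ = Fintype.card G * #A := sum_norm_sq_dft_ind A
    _ ≤ 1 * Fintype.card G ^ 2 := by rw [one_mul, sq]; gcongr

theorem exists_fin_forall_eq_or_norm_dft_sq_le (A : Finset G) {k : ℕ} {δ : ℝ}
    (hk : 1 ≤ k * δ) :
    ∃ ψ : Fin k → AddChar G ℂ, ∀ χ, (∃ i, ψ i = χ) ∨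
      ‖dft (fun x ↦ (ind A x : ℂ)) χ‖ ^ 2 ≤ δ * Fintype.card G ^ 2 := by
  classical
  set L : Finset (AddChar G ℂ) :=
    {χ | δ * Fintype.card G ^ 2 ≤ ‖dft (fun x ↦ (ind A x : ℂ)) χ‖ ^ 2}
  have hδ : 0 < δ := pos_of_mul_pos_right (one_pos.trans_le hk) (by positivity)
  have hL : #L ≤ k := by
    have := (card_mul_le_one_of_le_norm_dft_sq A (L := L) fun χ hχ ↦ (mem_filter.1 hχ).2).trans hk
    exact_mod_cast le_of_mul_le_mul_right this hδ
  obtain ⟨index⟩ := Function.Embedding.nonempty_of_card_le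
    (by simpa using hL : Fintype.card L ≤ Fintype.card (Fin k))
  refine ⟨Function.extend index Subtype.val 0, fun χ ↦ ?_⟩
  by_cases hχ : χ ∈ L
  · exact .inl ⟨index ⟨χ, hχ⟩, index.injective.extend_apply _ _ _⟩
  · exact .inr (by simpa [L] using hχ : _ < _).le

variable (G) in
/-- The sets that are unions of cosets of the joint kernel of some `k` characters. -/
noncomputable def cosetUnions (k : ℕ) : Finset (Finset G) := by
  classical exact {F | ∃ ψ : Fin k → AddChar G ℂ, ∀ w ∈ annihilator ψ, ∀ x ∈ F, x + w ∈ F}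

theorem mem_cosetUnions {k : ℕ} {F : Finset G} : F ∈ cosetUnions G k ↔
    ∃ ψ : Fin k → AddChar G ℂ, ∀ w ∈ annihilator ψ, ∀ x ∈ F, x + w ∈ F := by
  simp [cosetUnions]

theorem exists_mem_cosetUnions_card_sdiff_le [DecidableEq G] (A : Finset G) {e : ℝ} (he : 0 < e)
    {k : ℕ} (hk : 1 ≤ k * e ^ 7) :
    ∃ F ∈ cosetUnions G k, (#(A \ F) : ℝ) ≤ e * Fintype.card G ∧
      (#(popularSums e F \ (A + A)) : ℝ) ≤ e * Fintype.card G := by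
  obtain ⟨ψ, hψ⟩ := exists_fin_forall_eq_or_norm_dft_sq_le A hk
  set W := annihilator ψ
  have hA (χ : AddChar G ℂ) : (∀ w ∈ W, χ w = 1) ∨
      ‖dft (fun x ↦ (ind A x : ℂ)) χ‖ ^ 2 ≤ e ^ 7 * Fintype.card G ^ 2 :=
    (hψ χ).imp_left fun ⟨i, hi⟩ w hw ↦ hi ▸ mem_annihilator.1 hw i
  set F : Finset G := {x | e ≤ conv (ind A) (subgroupDensity W) x} with hF
  have hmem (x : G) : x ∈ F ↔ e ≤ conv (ind A) (subgroupDensity W) x := by simp [hF]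
  have hperiodic : ∀ w ∈ W, ∀ x, x + w ∈ F ↔ x ∈ F := fun w hw x ↦ by
    rw [hmem, hmem, conv_subgroupDensity_add W _ hw]
  refine ⟨F, mem_cosetUnions.2 ⟨ψ, fun w hw x ↦ (hperiodic w hw x).2⟩, ?_, ?_⟩
  · exact card_sdiff_le_of_conv_subgroupDensity_le he.le W
      (fun x hx ↦ (not_le.1 (mt (hmem x).2 hx)).le) hperiodic
  · exact card_popularSums_sdiff_add_self_le he W (fun x ↦ (hmem x).1) hA

open Classical in
theorem card_filter_periodic_annihilator_le {m : ℕ} [NeZero m] [Module (ZMod m) G] {k : ℕ}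
    (ψ : Fin k → AddChar G ℂ) :
    #{F : Finset G | ∀ w ∈ annihilator ψ, ∀ x ∈ F, x + w ∈ F} ≤ 2 ^ m ^ k := by
  set roots : Finset ℂ := Polynomial.nthRootsFinset m 1
  have hroots : #roots ≤ m := (Multiset.toFinset_card_le _).trans (Polynomial.card_nthRoots m 1)
  have hroot (i : Fin k) (x : G) : ψ i x ∈ roots := by
    rw [Polynomial.mem_nthRootsFinset (NeZero.pos m), ← AddChar.map_nsmul_eq_pow,
      ZModModule.char_nsmul_eq_zero m x, AddChar.map_zero_eq_one]
  set values : Finset G → Finset (Fin k → ℂ) := fun F ↦ F.image fun y i ↦ ψ i y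
  have hvalues {F : Finset G} (hF : ∀ w ∈ annihilator ψ, ∀ x ∈ F, x + w ∈ F) (x : G) :
      x ∈ F ↔ (fun i ↦ ψ i x) ∈ values F := by
    refine ⟨mem_image_of_mem (fun y i ↦ ψ i y), fun hx ↦ ?_⟩
    obtain ⟨y, hy, hyx⟩ := mem_image.1 hx
    have hxy : x - y ∈ annihilator ψ := mem_annihilator.2 fun i ↦ by
      rw [AddChar.map_sub_eq_div, ← congr_fun hyx i, div_self ((ψ i).val_isUnit y).ne_zero]
    simpa using hF _ hxy y hy
  calc _ ≤ #(Fintype.piFinset fun _ : Fin k ↦ roots).powerset := by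
        refine card_le_card_of_injOn values (fun F _ ↦ ?_) fun F hF F' hF' h ↦ ?_
        · exact mem_powerset.2 <| image_subset_iff.2 fun y _ ↦
            Fintype.mem_piFinset.2 fun i ↦ hroot i y
        · ext x
          rw [hvalues (mem_filter.1 hF).2, hvalues (mem_filter.1 hF').2, h]
    _ = 2 ^ #roots ^ k := by rw [card_powerset, Fintype.card_piFinset_const]
    _ ≤ 2 ^ m ^ k := by gcongr; exact one_le_two

theorem card_cosetUnions_le {m : ℕ} [NeZero m] [Module (ZMod m) G] (k : ℕ) :
    #(cosetUnions G k) ≤ Fintype.card G ^ k * 2 ^ m ^ k := by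
  classical
  calc #(cosetUnions G k) ≤ #(univ.biUnion fun ψ : Fin k → AddChar G ℂ ↦
        {F : Finset G | ∀ w ∈ annihilator ψ, ∀ x ∈ F, x + w ∈ F}) := by
        refine card_le_card fun F hF ↦ ?_
        simpa using mem_cosetUnions.1 hF
    _ ≤ Fintype.card (Fin k → AddChar G ℂ) * 2 ^ m ^ k :=
        card_biUnion_le_card_mul _ _ _ fun ψ _ ↦ card_filter_periodic_annihilator_le ψ
    _ = Fintype.card G ^ k * 2 ^ m ^ k := by
        rw [Fintype.card_fun, Fintype.card_fin, AddChar.card_eq]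

end Container

section Stability

variable {G : Type*} [AddCommGroup G] [Fintype G]

theorem card_mul_sum_sq_conv_self_le (F : Finset G) {M : ℝ}
    (hM : ∀ ψ : AddChar G ℂ, ψ ≠ 0 → ‖dft (fun x ↦ (ind F x : ℂ)) ψ‖ ≤ M) :
    Fintype.card G * ∑ x, conv (ind F) (ind F) x ^ 2 ≤
      #F ^ 4 + M ^ 2 * (Fintype.card G * #F - #F ^ 2) := by
  classical
  set a : AddChar G ℂ → ℝ := fun ψ ↦ ‖dft (fun x ↦ (ind F x : ℂ)) ψ‖
  have ha0 : a 0 = #F := by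
    simp only [a, dft_zero_right, ← Complex.ofReal_sum, sum_ind]
    simp
  have hdft (ψ : AddChar G ℂ) :
      ‖dft (fun x ↦ ((conv (ind F) (ind F) x : ℝ) : ℂ)) ψ‖ ^ 2 = a ψ ^ 2 * a ψ ^ 2 := by
    rw [conv_ofReal, dft_conv, norm_mul]
    ring
  have hrest : ∑ ψ ∈ univ.erase 0, a ψ ^ 2 = Fintype.card G * #F - #F ^ 2 := by
    rw [← sum_norm_sq_dft_ind, ← add_sum_erase _ _ (mem_univ (0 : AddChar G ℂ)), ← ha0]
    ring
  calc _ = ∑ ψ, a ψ ^ 2 * a ψ ^ 2 := by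
        rw [← sum_norm_sq_dft_ofReal]
        exact sum_congr rfl fun ψ _ ↦ hdft ψ
    _ = #F ^ 4 + ∑ ψ ∈ univ.erase 0, a ψ ^ 2 * a ψ ^ 2 := by
        rw [← add_sum_erase _ _ (mem_univ 0), ha0]
        ring
    _ ≤ #F ^ 4 + ∑ ψ ∈ univ.erase 0, M ^ 2 * a ψ ^ 2 := by
        gcongr with ψ hψ
        exact hM ψ (ne_of_mem_erase hψ)
    _ = _ := by rw [← mul_sum, hrest]

theorem sq_card_sub_le_sum_popularSums {e : ℝ} (he : 0 ≤ e) (F : Finset G) :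
    (#F : ℝ) ^ 2 - e * Fintype.card G ^ 2 ≤ ∑ x ∈ popularSums e F, conv (ind F) (ind F) x := by
  classical
  have hunpopular : ∑ x ∈ (popularSums e F)ᶜ, conv (ind F) (ind F) x ≤ e * Fintype.card G ^ 2 :=
    calc _ ≤ ∑ _x ∈ (popularSums e F)ᶜ, e * Fintype.card G := sum_le_sum fun x hx ↦
          (not_le.1 (mt mem_popularSums.2 (mem_compl.1 hx))).le
      _ ≤ ∑ _x : G, e * Fintype.card G :=
          sum_le_univ_sum_of_nonneg fun _ ↦ by positivity
      _ = e * Fintype.card G ^ 2 := by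
          rw [sum_const, card_univ, nsmul_eq_mul]
          ring
  have htotal := sum_add_sum_compl (popularSums e F) (conv (ind F) (ind F))
  rw [sum_conv, sum_ind, ← sq] at htotal
  linarith

/-- At `a = b = 1 / 2` and `e = 0` the bound says `1 / 2 ≤ μ`, which is what makes `F` close to a
coset of a subgroup of index two. -/
theorem sq_sq_density_sub_le {e μ : ℝ} (he : 0 ≤ e) {F : Finset G} {a b : ℝ}
    (ha : #F = a * Fintype.card G) (hb : #(popularSums e F) = b * Fintype.card G)
    (hea : e ≤ a ^ 2)
    (hμ : ∀ ψ : AddChar G ℂ, ψ ≠ 0 →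
      ‖dft (fun x ↦ (ind F x : ℂ)) ψ‖ ≤ μ * Fintype.card G) :
    (a ^ 2 - e) ^ 2 ≤ b * (a ^ 4 + μ ^ 2 * (a - a ^ 2)) := by
  set N : ℝ := (Fintype.card G : ℝ)
  have hN : 0 < N := Nat.cast_pos.2 Fintype.card_pos
  have hb0 : 0 ≤ b * N := hb ▸ Nat.cast_nonneg _
  have hpopular : (a ^ 2 - e) * N ^ 2 ≤ ∑ x ∈ popularSums e F, conv (ind F) (ind F) x := by
    have := sq_card_sub_le_sum_popularSums he F
    rw [ha] at this
    linarith
  have henergy := card_mul_sum_sq_conv_self_le F hμ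
  rw [ha] at henergy
  refine le_of_mul_le_mul_right ?_ (pow_pos hN 5)
  calc (a ^ 2 - e) ^ 2 * N ^ 5 = N * ((a ^ 2 - e) * N ^ 2) ^ 2 := by ring
    _ ≤ N * (∑ x ∈ popularSums e F, conv (ind F) (ind F) x) ^ 2 := by
        have : 0 ≤ a ^ 2 - e := sub_nonneg.2 hea
        gcongr
    _ ≤ N * (b * N * ∑ x, conv (ind F) (ind F) x ^ 2) := by
        rw [← hb]
        gcongr
        refine sq_sum_le_card_mul_sum_sq.trans ?_
        gcongr
        exact subset_univ _
    _ = b * N * (N * ∑ x, conv (ind F) (ind F) x ^ 2) := by ring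
    _ ≤ b * N * ((a * N) ^ 4 + (μ * N) ^ 2 * (N * (a * N) - (a * N) ^ 2)) := by gcongr
    _ = b * (a ^ 4 + μ ^ 2 * (a - a ^ 2)) * N ^ 5 := by ring

theorem exists_lt_norm_dft_of_card_popularSums_le {F : Finset G}
    (hF : (1 / 2 - 1 / 1000) * (Fintype.card G : ℝ) ≤ #F)
    (hpop : (#(popularSums (1 / 100000) F) : ℝ) ≤ (1 / 2 + 1 / 1000) * Fintype.card G) :
    ∃ ψ : AddChar G ℂ, ψ ≠ 0 ∧
      (1 / 2 - 1 / 200) * Fintype.card G < ‖dft (fun x ↦ (ind F x : ℂ)) ψ‖ := by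
  by_contra! hsmall
  have hN : (0 : ℝ) < Fintype.card G := Nat.cast_pos.2 Fintype.card_pos
  have hcard : (#F : ℝ) ≤ Fintype.card G := mod_cast card_le_univ F
  obtain ⟨a, ha⟩ : ∃ a : ℝ, #F = a * Fintype.card G :=
    ⟨#F / Fintype.card G, (div_mul_cancel₀ _ hN.ne').symm⟩
  obtain ⟨b, hb⟩ : ∃ b : ℝ, #(popularSums (1 / 100000) F) = b * Fintype.card G :=
    ⟨#(popularSums (1 / 100000) F) / Fintype.card G, (div_mul_cancel₀ _ hN.ne').symm⟩
  have ha_lower : 1 / 2 - 1 / 1000 ≤ a := le_of_mul_le_mul_right (ha ▸ hF) hN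
  have ha_upper : a ≤ 1 := le_of_mul_le_mul_right (by rwa [one_mul, ← ha]) hN
  have hb_upper : b ≤ 1 / 2 + 1 / 1000 := le_of_mul_le_mul_right (hb ▸ hpop) hN
  have hsq : a ^ 2 ≤ 1 := pow_le_one₀ (by linarith) ha_upper
  have hmain := sq_sq_density_sub_le (by norm_num) ha hb (by nlinarith) hsmall
  have hfactor : a ^ 4 + (1 / 2 - 1 / 200) ^ 2 * (a - a ^ 2) ≤
      a ^ 4 + (1 / 2 - 1 / 200) ^ 2 * (1 / 4) := by
    gcongr
    nlinarith [sq_nonneg (a - 1 / 2)]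
  have hbound : (a ^ 2 - 1 / 100000) ^ 2 ≤
      (1 / 2 + 1 / 1000) * (a ^ 4 + (1 / 2 - 1 / 200) ^ 2 * (1 / 4)) := by
    refine hmain.trans (mul_le_mul hb_upper hfactor ?_ (by norm_num))
    have : 0 ≤ a - a ^ 2 := by nlinarith
    positivity
  have hquartic : a ^ 4 - 2 / 100000 ≤ (a ^ 2 - 1 / 100000) ^ 2 := by nlinarith
  have hquartic_lower : (1 / 2 - 1 / 1000 : ℝ) ^ 4 ≤ a ^ 4 := by gcongr
  linarith [hbound, hquartic, hquartic_lower]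

end Stability

section Counting

variable {α : Type*} [Fintype α]

theorem one_add_le_two_rpow {x : ℝ} (hx : 0 ≤ x) : x + 1 ≤ (2 : ℝ) ^ (2 * x) := by
  have hlog : x ≤ Real.log 2 * (2 * x) := by nlinarith [Real.log_two_gt_d9]
  calc x + 1 ≤ Real.exp x := Real.add_one_le_exp x
    _ ≤ Real.exp (Real.log 2 * (2 * x)) := Real.exp_le_exp.2 hlog
    _ = 2 ^ (2 * x) := (Real.rpow_def_of_pos two_pos _).symm

/-- Each set of size at most `t * #α` has weight at least `2 ^ (-s * t * #α)` when every element is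
given weight `2 ^ (-s)`, and the total weight of all sets is `(1 + 2 ^ (-s)) ^ #α`. -/
theorem card_filter_card_le_le_two_rpow (t : ℝ) {s : ℝ} (hs : 0 ≤ s) :
    (#{X : Finset α | (#X : ℝ) ≤ t * Fintype.card α} : ℝ) ≤
      2 ^ ((s * t + 2 ^ (1 - s)) * Fintype.card α) := by
  set N := Fintype.card α
  have hweight (X : Finset α) : ((2 : ℝ) ^ (-s)) ^ #X = 2 ^ (-(s * #X)) := by
    rw [← Real.rpow_natCast, ← Real.rpow_mul two_pos.le, neg_mul]
  have htotal : ∑ X : Finset α, (2 : ℝ) ^ (-(s * #X)) ≤ 2 ^ (2 ^ (1 - s) * N : ℝ) :=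
    calc _ = ((2 : ℝ) ^ (-s) + 1) ^ N := by
          simpa only [hweight, one_pow, mul_one] using
            Fintype.sum_pow_mul_eq_add_pow α ((2 : ℝ) ^ (-s)) 1
      _ ≤ ((2 : ℝ) ^ (2 * (2 : ℝ) ^ (-s))) ^ N := by
          gcongr
          exact one_add_le_two_rpow (by positivity)
      _ = _ := by
          rw [← Real.rpow_natCast, ← Real.rpow_mul two_pos.le, sub_eq_add_neg 1 s,
            Real.rpow_add two_pos, Real.rpow_one]
  have hlower : #{X : Finset α | (#X : ℝ) ≤ t * N} * (2 : ℝ) ^ (-(s * t * N)) ≤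
      ∑ X : Finset α, (2 : ℝ) ^ (-(s * #X)) := by
    rw [← nsmul_eq_mul]
    refine (card_nsmul_le_sum _ _ _ fun X hX ↦ ?_).trans
      (sum_le_univ_sum_of_nonneg fun X ↦ by positivity)
    refine Real.rpow_le_rpow_of_exponent_le one_le_two (neg_le_neg ?_)
    rw [mul_assoc]
    exact mul_le_mul_of_nonneg_left (mem_filter.1 hX).2 hs
  rw [add_mul, Real.rpow_add two_pos, ← div_le_iff₀' (by positivity), div_eq_mul_inv,
    ← Real.rpow_neg two_pos.le]
  exact hlower.trans htotal

variable [DecidableEq α]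

/-- The sets with at most `t * #α` elements outside `Y`. -/
noncomputable def almostSubsets (t : ℝ) (Y : Finset α) : Finset (Finset α) :=
  {A | (#(A \ Y) : ℝ) ≤ t * Fintype.card α}

theorem mem_almostSubsets {t : ℝ} {Y A : Finset α} :
    A ∈ almostSubsets t Y ↔ (#(A \ Y) : ℝ) ≤ t * Fintype.card α := by
  simp [almostSubsets]

theorem mem_almostSubsets_trans {s t : ℝ} {Y Z A : Finset α} (hA : A ∈ almostSubsets s Y)
    (hY : Y ∈ almostSubsets t Z) : A ∈ almostSubsets (t + s) Z := by
  rw [mem_almostSubsets] at *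
  have hunion : #(A \ Z) ≤ #(Y \ Z) + #(A \ Y) :=
    (card_le_card (sdiff_triangle A Y Z |>.trans_eq (union_comm _ _))).trans (card_union_le _ _)
  calc (#(A \ Z) : ℝ) ≤ #(Y \ Z) + #(A \ Y) := mod_cast hunion
    _ ≤ (t + s) * Fintype.card α := by linarith

theorem card_le_card_image_inter_mul {t s : ℝ} (hs : 0 ≤ s) {Y : Finset α}
    {𝒜 : Finset (Finset α)} (h𝒜 : 𝒜 ⊆ almostSubsets t Y) :
    (#𝒜 : ℝ) ≤ #(𝒜.image (· ∩ Y)) * 2 ^ ((s * t + 2 ^ (1 - s)) * Fintype.card α) := by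
  set small : Finset (Finset α) := {X | (#X : ℝ) ≤ t * Fintype.card α}
  have hsplit : #𝒜 ≤ #(𝒜.image (· ∩ Y) ×ˢ small) := by
    refine card_le_card_of_injOn (fun A ↦ (A ∩ Y, A \ Y)) (fun A hA ↦ ?_) fun A _ B _ h ↦ ?_
    · exact mem_product.2 ⟨mem_image_of_mem (· ∩ Y) hA,
        mem_filter.2 ⟨mem_univ _, mem_almostSubsets.1 (h𝒜 hA)⟩⟩
    · obtain ⟨hinter, hsdiff⟩ := Prod.mk.inj h
      rw [← sdiff_union_inter A Y, ← sdiff_union_inter B Y, hinter, hsdiff]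
  calc (#𝒜 : ℝ) ≤ #(𝒜.image (· ∩ Y)) * #small := by
        rw [card_product] at hsplit
        exact_mod_cast hsplit
    _ ≤ _ := by
        gcongr
        exact card_filter_card_le_le_two_rpow t hs

theorem card_almostSubsets_le (t : ℝ) {s : ℝ} (hs : 0 ≤ s) (Y : Finset α) :
    (#(almostSubsets t Y) : ℝ) ≤
      2 ^ (#Y + (s * t + 2 ^ (1 - s)) * Fintype.card α) := by
  refine (card_le_card_image_inter_mul hs Subset.rfl).trans ?_
  rw [Real.rpow_add two_pos, Real.rpow_natCast]
  gcongr
  have hsub : (almostSubsets t Y).image (· ∩ Y) ⊆ Y.powerset :=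
    image_subset_iff.2 fun A _ ↦ mem_powerset.2 inter_subset_right
  exact_mod_cast card_powerset Y ▸ card_le_card hsub

omit [Fintype α] in
theorem card_le_three_pow_of_subset_union_image {P : Finset α} {σ : α → α} {ℬ : Finset (Finset α)}
    (hsub : ∀ B ∈ ℬ, B ⊆ P ∪ P.image σ) (hσ : ∀ B ∈ ℬ, ∀ x ∈ B, σ x ∉ B) :
    #ℬ ≤ 3 ^ #P := by
  set codes : Finset (Bool × Bool) := {c | ¬(c.1 ∧ c.2)}
  set code : Finset α → P → Bool × Bool := fun B p ↦ (decide (p.1 ∈ B), decide (σ p ∈ B))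
  have hcode {B B' : Finset α} (hB : B ∈ ℬ) (h : code B = code B') : B ⊆ B' := by
    intro x hx
    rcases mem_union.1 (hsub B hB hx) with hxP | hxP
    · have := congr_fun h ⟨x, hxP⟩
      simp_all [code]
    · obtain ⟨p, hp, rfl⟩ := mem_image.1 hxP
      have := congr_fun h ⟨p, hp⟩
      simp_all [code]
  calc #ℬ ≤ #(Fintype.piFinset fun _ : P ↦ codes) := by
        refine card_le_card_of_injOn code (fun B hB ↦ ?_) fun B hB B' hB' h ↦
          (hcode hB h).antisymm (hcode hB' h.symm)
        exact Fintype.mem_piFinset.2 fun p ↦ by simpa [codes, code] using hσ B hB p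
    _ = 3 ^ #P := by
        rw [Fintype.card_piFinset, prod_const, card_univ, Fintype.card_coe]
        rfl

omit [Fintype α] in
theorem cast_card_biUnion_le {ι : Type*} (s : Finset ι) (f : ι → Finset α) {c : ℝ}
    (hf : ∀ i ∈ s, (#(f i) : ℝ) ≤ c) : (#(s.biUnion f) : ℝ) ≤ #s * c :=
  calc (#(s.biUnion f) : ℝ) ≤ ∑ i ∈ s, (#(f i) : ℝ) := mod_cast card_biUnion_le
    _ ≤ #s * c := nsmul_eq_mul (#s) c ▸ sum_le_card_nsmul _ _ _ hf

end Counting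

section LevelSet

variable {G : Type*} [AddCommGroup G]

theorem addChar_apply_eq_one_or_eq_neg_one [Module (ZMod 2) G] (ψ : AddChar G ℂ) (x : G) :
    ψ x = 1 ∨ ψ x = -1 := by
  rw [← sq_eq_one_iff, ← AddChar.map_nsmul_eq_pow, ZModModule.char_nsmul_eq_zero 2 x,
    AddChar.map_zero_eq_one]

variable [Fintype G]

/-- The set where a character takes the sign `z`; for a nontrivial character of an elementary
abelian `2`-group this is a coset of a subgroup of index two. -/
noncomputable def levelSet (ψ : AddChar G ℂ) (z : ℤˣ) : Finset G := {x | ψ x = (z : ℤ)}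

theorem mem_levelSet {ψ : AddChar G ℂ} {z : ℤˣ} {x : G} : x ∈ levelSet ψ z ↔ ψ x = (z : ℤ) := by
  simp [levelSet]

theorem add_mem_levelSet_mul {ψ : AddChar G ℂ} {z w : ℤˣ} {x y : G} (hx : x ∈ levelSet ψ z)
    (hy : y ∈ levelSet ψ w) : x + y ∈ levelSet ψ (z * w) := by
  rw [mem_levelSet] at *
  simp [AddChar.map_add_eq_mul, hx, hy]

variable [Module (ZMod 2) G]

theorem mem_levelSet_neg {ψ : AddChar G ℂ} {z : ℤˣ} {x : G} :
    x ∈ levelSet ψ (-z) ↔ x ∉ levelSet ψ z := by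
  rw [mem_levelSet, mem_levelSet]
  rcases Int.units_eq_one_or z with rfl | rfl <;>
    rcases addChar_apply_eq_one_or_eq_neg_one ψ x with h | h <;> norm_num [h]

theorem exists_mem_levelSet_neg_one {ψ : AddChar G ℂ} (hψ : ψ ≠ 0) : ∃ a, a ∈ levelSet ψ (-1) := by
  obtain ⟨a, ha⟩ := AddChar.ne_zero_iff.1 hψ
  exact ⟨a, mem_levelSet_neg.2 (by simpa [mem_levelSet] using ha)⟩

theorem card_levelSet {ψ : AddChar G ℂ} (hψ : ψ ≠ 0) (z : ℤˣ) :
    (#(levelSet ψ z) : ℝ) = Fintype.card G / 2 := by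
  classical
  obtain ⟨a, ha⟩ := exists_mem_levelSet_neg_one hψ
  have hle (z : ℤˣ) : #(levelSet ψ z) ≤ #(levelSet ψ (-z)) :=
    card_le_card_of_injOn (· + a) (fun x hx ↦ by simpa using add_mem_levelSet_mul hx ha)
      (add_left_injective a).injOn
  have hneg : #(levelSet ψ (-z)) = #(levelSet ψ z) :=
    ((hle (-z)).trans_eq (by rw [neg_neg])).antisymm (hle z)
  have hcompl : (levelSet ψ z)ᶜ = levelSet ψ (-z) := by
    ext x
    rw [mem_compl, mem_levelSet_neg]
  have htotal : (#(levelSet ψ z) : ℝ) + #(levelSet ψ z) = Fintype.card G := by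
    have := card_add_card_compl (levelSet ψ z)
    rw [hcompl, hneg] at this
    exact_mod_cast this
  linarith

variable [DecidableEq G]

theorem disjoint_levelSet_neg_one_add_self (ψ : AddChar G ℂ) :
    Disjoint (levelSet ψ (-1) + levelSet ψ (-1)) (levelSet ψ (-1)) := by
  refine disjoint_left.2 fun x hx ↦ ?_
  obtain ⟨a, ha, b, hb, rfl⟩ := mem_add.1 hx
  rw [mem_levelSet_neg, not_not]
  simpa using add_mem_levelSet_mul ha hb

theorem dft_ind_eq (F : Finset G) (ψ : AddChar G ℂ) :
    dft (fun x ↦ (ind F x : ℂ)) ψ = ((#(F ∩ levelSet ψ 1) - #(F ∩ levelSet ψ (-1)) : ℝ) : ℂ) := by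
  have hterm (x : G) :
      (ind F x : ℂ) * ψ x = ((ind (F ∩ levelSet ψ 1) x - ind (F ∩ levelSet ψ (-1)) x : ℝ) : ℂ) := by
    by_cases hx : x ∈ F <;> rcases addChar_apply_eq_one_or_eq_neg_one ψ x with h | h <;>
      norm_num [Set.indicator_apply, mem_levelSet, hx, h]
  rw [dft, ← sum_ind, ← sum_ind, ← sum_sub_distrib, Complex.ofReal_sum]
  exact sum_congr rfl fun x _ ↦ hterm x

theorem exists_mem_almostSubsets_levelSet {F : Finset G} {ψ : AddChar G ℂ} (hψ : ψ ≠ 0) {t : ℝ}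
    (hF : (1 / 2 - t) * Fintype.card G ≤ ‖dft (fun x ↦ (ind F x : ℂ)) ψ‖) :
    ∃ z, F ∈ almostSubsets t (levelSet ψ z) := by
  have hsdiff (z : ℤˣ) : F \ levelSet ψ z = F ∩ levelSet ψ (-z) := by
    ext x
    rw [mem_sdiff, mem_inter, mem_levelSet_neg]
  have hcard (z : ℤˣ) : (#(F ∩ levelSet ψ z) : ℝ) ≤ Fintype.card G / 2 :=
    card_levelSet hψ z ▸ Nat.cast_le.2 (card_le_card inter_subset_right)
  rw [dft_ind_eq, Complex.norm_real, Real.norm_eq_abs] at hF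
  rcases le_abs'.1 hF with h | h
  · refine ⟨-1, mem_almostSubsets.2 ?_⟩
    rw [hsdiff, neg_neg]
    linarith [hcard (-1)]
  · refine ⟨1, mem_almostSubsets.2 ?_⟩
    rw [hsdiff]
    linarith [hcard 1]

theorem card_levelSet_inter_levelSet_le {ψ χ : AddChar G ℂ} (hψ : ψ ≠ 0) {h : G}
    (hψh : h ∈ levelSet ψ 1) (hχh : h ∈ levelSet χ (-1)) (z : ℤˣ) :
    (#(levelSet ψ z ∩ levelSet χ 1) : ℝ) ≤ Fintype.card G / 4 := by
  set P := levelSet ψ z ∩ levelSet χ 1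
  have hdisj : Disjoint P (P.image (· + h)) := by
    refine disjoint_left.2 fun x hx hxP ↦ ?_
    obtain ⟨y, hy, rfl⟩ := mem_image.1 hxP
    have hyh : y + h ∈ levelSet χ (1 * -1) :=
      add_mem_levelSet_mul (mem_of_mem_inter_right hy) hχh
    rw [one_mul] at hyh
    exact mem_levelSet_neg.1 hyh (mem_of_mem_inter_right hx)
  have hsub : P ∪ P.image (· + h) ⊆ levelSet ψ z := by
    refine union_subset inter_subset_left (image_subset_iff.2 fun x hx ↦ ?_)
    simpa using add_mem_levelSet_mul (mem_of_mem_inter_left hx) hψh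
  have hcard := card_le_card hsub
  rw [card_union_of_disjoint hdisj, card_image_of_injective P (add_left_injective h)] at hcard
  have : (#P + #P : ℝ) ≤ #(levelSet ψ z) := mod_cast hcard
  rw [card_levelSet hψ] at this
  linarith

theorem three_pow_le_two_rpow {k : ℕ} {x : ℝ} (hk : k ≤ x) : (3 : ℝ) ^ k ≤ 2 ^ (8 / 5 * x) := by
  have hthree : (3 : ℝ) ≤ 2 ^ (8 / 5 : ℝ) := by
    refine le_of_pow_le_pow_left₀ (n := 5) (by norm_num) (by positivity) ?_
    rw [← Real.rpow_natCast (2 ^ (8 / 5 : ℝ)), ← Real.rpow_mul two_pos.le]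
    norm_num
  calc (3 : ℝ) ^ k ≤ (2 ^ (8 / 5 : ℝ)) ^ k := by gcongr
    _ = 2 ^ (8 / 5 * k : ℝ) := by rw [← Real.rpow_natCast, ← Real.rpow_mul two_pos.le]
    _ ≤ 2 ^ (8 / 5 * x) := by gcongr; exact one_le_two

/-- A set `A` with `h ∉ A + A` contains at most one of `x` and `x + h`, leaving three choices for
each of the `#G / 4` pairs in the coset `levelSet ψ z`. -/
theorem card_filter_notMem_add_self_le {ψ : AddChar G ℂ} (hψ : ψ ≠ 0) {h : G} (hh : h ≠ 0)
    (hψh : h ∈ levelSet ψ 1) (z : ℤˣ) (t : ℝ) {s : ℝ} (hs : 0 ≤ s) :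
    (#{A ∈ almostSubsets t (levelSet ψ z) | h ∉ A + A} : ℝ) ≤
      2 ^ ((2 / 5 + (s * t + 2 ^ (1 - s))) * Fintype.card G) := by
  obtain ⟨χ, hχ⟩ := AddChar.exists_apply_ne_zero.2 hh
  have hχh : h ∈ levelSet χ (-1) := mem_levelSet_neg.2 (by simpa [mem_levelSet] using hχ)
  set P := levelSet ψ z ∩ levelSet χ 1
  have hcover : levelSet ψ z ⊆ P ∪ P.image (· + h) := fun x hx ↦ by
    by_cases hxχ : x ∈ levelSet χ 1
    · exact mem_union_left _ (mem_inter.2 ⟨hx, hxχ⟩)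
    · refine mem_union_right _ (mem_image.2 ⟨x + h, mem_inter.2 ⟨?_, ?_⟩, ?_⟩)
      · simpa using add_mem_levelSet_mul hx hψh
      · simpa using add_mem_levelSet_mul (mem_levelSet_neg.2 hxχ) hχh
      · rw [add_assoc, ZModModule.add_self, add_zero]
  set 𝒜 := {A ∈ almostSubsets t (levelSet ψ z) | h ∉ A + A}
  have htraces : #(𝒜.image (· ∩ levelSet ψ z)) ≤ 3 ^ #P := by
    refine card_le_three_pow_of_subset_union_image (σ := (· + h)) ?_ ?_
    · exact forall_mem_image.2 fun A _ ↦ inter_subset_right.trans hcover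
    · refine forall_mem_image.2 fun A hA x hx hxh ↦ (mem_filter.1 hA).2 ?_
      refine mem_add.2 ⟨x, mem_of_mem_inter_left hx, x + h, mem_of_mem_inter_left hxh, ?_⟩
      rw [← add_assoc, ZModModule.add_self, zero_add]
  have hthree : (3 : ℝ) ^ #P ≤ 2 ^ (2 / 5 * Fintype.card G : ℝ) := by
    convert three_pow_le_two_rpow (card_levelSet_inter_levelSet_le hψ hψh hχh z) using 2
    ring
  rw [add_mul, Real.rpow_add two_pos]
  refine (card_le_card_image_inter_mul hs (filter_subset _ _)).trans ?_
  gcongr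
  exact le_trans (mod_cast htraces) hthree

end LevelSet

section SumsetFamilies

variable {G : Type*} [AddCommGroup G] [Fintype G] [DecidableEq G]

/-- A set `T` contained in a sum-free set `Y` is recovered from the sumset of `T ∪ {0}` by
intersecting with `Y`. -/
theorem two_pow_card_le_card_image_add_self {Y : Finset G} (hY : Disjoint (Y + Y) Y) :
    2 ^ #Y ≤ #(univ.image fun A : Finset G ↦ A + A) := by
  have hzero : (0 : G) ∉ Y := fun h ↦ disjoint_left.1 hY (mem_add.2 ⟨0, h, 0, h, add_zero 0⟩) h
  have hrecover {T : Finset G} (hT : T ⊆ Y) : (insert 0 T + insert 0 T) ∩ Y = T := by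
    refine subset_antisymm (fun x hx ↦ ?_) fun x hx ↦ mem_inter.2 ⟨?_, hT hx⟩
    · obtain ⟨hxsum, hxY⟩ := mem_inter.1 hx
      obtain ⟨a, ha, b, hb, rfl⟩ := mem_add.1 hxsum
      rcases mem_insert.1 ha with rfl | ha <;> rcases mem_insert.1 hb with rfl | hb
      · exact absurd hxY (by rwa [add_zero])
      · rwa [zero_add]
      · rwa [add_zero]
      · exact absurd hxY (disjoint_left.1 hY (add_mem_add (hT ha) (hT hb)))
    · exact mem_add.2 ⟨0, mem_insert_self _ _, x, mem_insert_of_mem hx, zero_add x⟩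
  rw [← card_powerset]
  refine card_le_card_of_injOn (fun T ↦ insert 0 T + insert 0 T) (fun T _ ↦ ?_)
    fun T hT T' hT' h ↦ ?_
  · exact mem_image_of_mem (fun A ↦ A + A) (mem_univ _)
  · rw [← hrecover (mem_powerset.1 hT), ← hrecover (mem_powerset.1 hT')]
    exact congrArg (· ∩ Y) h

/-- The sets nearly contained in some `Y i` that has notably fewer than `#α / 2` elements. -/
noncomputable def nearSmallSets {ι α : Type*} [Fintype α] [DecidableEq α] (s : Finset ι)
    (Y : ι → Finset α) : Finset (Finset α) :=
  {i ∈ s | (#(Y i) : ℝ) ≤ (1 / 2 - 1 / 1000) * Fintype.card α}.biUnion fun i ↦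
    almostSubsets (1 / 100000) (Y i)

variable (G) in
/-- The sets nearly contained in a coset of the kernel of a nontrivial character whose sumset
misses a nonzero element of that kernel. -/
noncomputable def nearCosetSets : Finset (Finset G) :=
  ({p | p.1 ≠ 0 ∧ p.2.1 ≠ 0 ∧ p.2.1 ∈ levelSet p.1 1} : Finset (AddChar G ℂ × G × ℤˣ)).biUnion
    fun p ↦ {A ∈ almostSubsets (1 / 200 + 1 / 100000) (levelSet p.1 p.2.2) | p.2.1 ∉ A + A}

variable (G) in
/-- The sumsets in `G` that do not contain the set where a nontrivial character equals `1`; in an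
elementary abelian `2`-group these sets are the subgroups of index two. -/
noncomputable def sumsetsAvoidingKernels : Finset (Finset G) :=
  {S ∈ univ.image fun A : Finset G ↦ A + A | ∀ ψ : AddChar G ℂ, ψ ≠ 0 → ¬ levelSet ψ 1 ⊆ S}

theorem card_nearSmallSets_le {ι α : Type*} [Fintype α] [DecidableEq α] (s : Finset ι)
    (Y : ι → Finset α) :
    (#(nearSmallSets s Y) : ℝ) ≤ #s * 2 ^ ((1 / 2 - 3 / 10000) * Fintype.card α : ℝ) := by
  refine (cast_card_biUnion_le _ _ fun i hi ↦ ?_).trans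
    (mul_le_mul_of_nonneg_right (mod_cast card_filter_le _ _) (by positivity))
  have hcard := (mem_filter.1 hi).2
  refine (card_almostSubsets_le _ (by norm_num : (0 : ℝ) ≤ 12) _).trans
    (Real.rpow_le_rpow_of_exponent_le one_le_two ?_)
  have hentropy : (12 * (1 / 100000) + 2 ^ (1 - 12 : ℝ) : ℝ) ≤ 7 / 10000 := by norm_num
  calc _ ≤ (1 / 2 - 1 / 1000) * (Fintype.card α : ℝ) + 7 / 10000 * Fintype.card α := by gcongr
    _ = _ := by ring

variable [Module (ZMod 2) G]

theorem card_nearCosetSets_le : (#(nearCosetSets G) : ℝ) ≤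
    2 * Fintype.card G ^ 2 * 2 ^ ((1 / 2 - 3 / 10000) * Fintype.card G : ℝ) := by
  have hindex : #{p : AddChar G ℂ × G × ℤˣ | p.1 ≠ 0 ∧ p.2.1 ≠ 0 ∧ p.2.1 ∈ levelSet p.1 1} ≤
      2 * Fintype.card G ^ 2 := by
    refine (card_le_univ _).trans_eq ?_
    rw [Fintype.card_prod, Fintype.card_prod, AddChar.card_eq, Fintype.card_units_int]
    ring
  refine (cast_card_biUnion_le _ _ fun p hp ↦ ?_).trans
    (mul_le_mul_of_nonneg_right (mod_cast hindex) (by positivity))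
  obtain ⟨hψ, hh, hψh⟩ := (mem_filter.1 hp).2
  refine (card_filter_notMem_add_self_le hψ hh hψh _ _ (by norm_num : (0 : ℝ) ≤ 7)).trans
    (Real.rpow_le_rpow_of_exponent_le one_le_two ?_)
  gcongr
  norm_num

theorem mem_nearSmallSets_or_mem_almostSubsets_levelSet {k : ℕ}
    (hk : 1 ≤ k * (1 / 100000 : ℝ) ^ 7) (A : Finset G) :
    A ∈ nearSmallSets (cosetUnions G k) id ∨
      (A + A)ᶜ ∈ nearSmallSets (cosetUnions G k) (fun F ↦ (popularSums (1 / 100000) F)ᶜ) ∨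
      ∃ ψ : AddChar G ℂ, ψ ≠ 0 ∧ ∃ z,
        A ∈ almostSubsets (1 / 200 + 1 / 100000) (levelSet ψ z) := by
  obtain ⟨F, hF, hAF, hpop⟩ := exists_mem_cosetUnions_card_sdiff_le A (by norm_num) hk
  rw [← mem_almostSubsets] at hAF
  by_cases hFsmall : (#F : ℝ) ≤ (1 / 2 - 1 / 1000) * Fintype.card G
  · exact .inl (mem_biUnion.2 ⟨F, mem_filter.2 ⟨hF, hFsmall⟩, hAF⟩)
  by_cases hpopsmall :
    (#(popularSums (1 / 100000) F)ᶜ : ℝ) ≤ (1 / 2 - 1 / 1000) * Fintype.card G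
  · refine .inr (.inl (mem_biUnion.2 ⟨F, mem_filter.2 ⟨hF, hpopsmall⟩, ?_⟩))
    rwa [mem_almostSubsets, compl_sdiff_compl]
  have htotal : (#(popularSums (1 / 100000) F) : ℝ) + #(popularSums (1 / 100000) F)ᶜ =
      Fintype.card G := mod_cast card_add_card_compl _
  obtain ⟨ψ, hψ, hlarge⟩ := exists_lt_norm_dft_of_card_popularSums_le (not_le.1 hFsmall).le
    (by linarith)
  obtain ⟨z, hz⟩ := exists_mem_almostSubsets_levelSet hψ hlarge.le
  exact .inr (.inr ⟨ψ, hψ, z, mem_almostSubsets_trans hAF hz⟩)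

theorem mem_nearCosetSets {A : Finset G} (hA : A.Nonempty) {ψ : AddChar G ℂ} (hψ : ψ ≠ 0)
    {z : ℤˣ} (hAψ : A ∈ almostSubsets (1 / 200 + 1 / 100000) (levelSet ψ z))
    (hker : ¬ levelSet ψ 1 ⊆ A + A) : A ∈ nearCosetSets G := by
  obtain ⟨h, hψh, hhA⟩ := not_subset.1 hker
  have hh : h ≠ 0 := by
    rintro rfl
    obtain ⟨a, ha⟩ := hA
    exact hhA (mem_add.2 ⟨a, ha, a, ha, ZModModule.add_self a⟩)
  exact mem_biUnion.2 ⟨(ψ, h, z), mem_filter.2 ⟨mem_univ _, hψ, hh, hψh⟩,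
    mem_filter.2 ⟨hAψ, hhA⟩⟩

theorem sumsetsAvoidingKernels_subset {k : ℕ} (hk : 1 ≤ k * (1 / 100000 : ℝ) ^ 7) :
    sumsetsAvoidingKernels G ⊆ insert ∅
      ((nearSmallSets (cosetUnions G k) id ∪ nearCosetSets G).image (fun A ↦ A + A) ∪
        (nearSmallSets (cosetUnions G k) fun F ↦ (popularSums (1 / 100000) F)ᶜ).image compl) := by
  intro S hS
  obtain ⟨hsum, hker⟩ := mem_filter.1 hS
  obtain ⟨A, -, rfl⟩ := mem_image.1 hsum
  rcases A.eq_empty_or_nonempty with rfl | hA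
  · exact mem_insert.2 (.inl (empty_add _))
  refine mem_insert_of_mem ?_
  rcases mem_nearSmallSets_or_mem_almostSubsets_levelSet hk A with h | h | ⟨ψ, hψ, z, hAψ⟩
  · exact mem_union_left _ (mem_image_of_mem _ (mem_union_left _ h))
  · exact mem_union_right _ (mem_image.2 ⟨_, h, compl_compl _⟩)
  · exact mem_union_left _
      (mem_image_of_mem _ (mem_union_right _ (mem_nearCosetSets hA hψ hAψ (hker ψ hψ))))

theorem card_sumsetsAvoidingKernels_le_add {k : ℕ} (hk : 1 ≤ k * (1 / 100000 : ℝ) ^ 7) :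
    #(sumsetsAvoidingKernels G) ≤ #(nearSmallSets (cosetUnions G k) id) + #(nearCosetSets G) +
      #(nearSmallSets (cosetUnions G k) fun F ↦ (popularSums (1 / 100000) F)ᶜ) + 1 := by
  refine (card_le_card (sumsetsAvoidingKernels_subset hk)).trans ((card_insert_le _ _).trans ?_)
  gcongr
  exact (card_union_le _ _).trans
    (Nat.add_le_add (card_image_le.trans (card_union_le _ _)) card_image_le)

theorem card_sumsetsAvoidingKernels_le {k : ℕ} (hk : 1 ≤ k * (1 / 100000 : ℝ) ^ 7) :
    (#(sumsetsAvoidingKernels G) : ℝ) ≤ 2 ^ (2 ^ k + 3) * Fintype.card G ^ (k + 2) *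
      2 ^ ((1 / 2 - 3 / 10000) * Fintype.card G : ℝ) := by
  set N : ℝ := (Fintype.card G : ℝ)
  set X : ℝ := 2 ^ ((1 / 2 - 3 / 10000) * N)
  have hN : 1 ≤ N := Nat.one_le_cast.2 Fintype.card_pos
  have hX : 1 ≤ X := Real.one_le_rpow one_le_two (by linarith)
  have htwo : (1 : ℝ) ≤ 2 ^ 2 ^ k := one_le_pow₀ one_le_two
  have hsmall (Y : Finset G → Finset G) :
      (#(nearSmallSets (cosetUnions G k) Y) : ℝ) ≤ 2 ^ 2 ^ k * N ^ (k + 2) * X := by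
    refine (card_nearSmallSets_le _ _).trans ?_
    gcongr
    calc (#(cosetUnions G k) : ℝ) ≤ (Fintype.card G ^ k * 2 ^ 2 ^ k : ℕ) :=
          Nat.cast_le.2 (card_cosetUnions_le (m := 2) k)
      _ = 2 ^ 2 ^ k * N ^ k := by push_cast; exact mul_comm _ _
      _ ≤ 2 ^ 2 ^ k * N ^ (k + 2) := by gcongr; exact le_self_add
  have hcoset : (#(nearCosetSets G) : ℝ) ≤ 2 * (2 ^ 2 ^ k * N ^ (k + 2) * X) := by
    refine card_nearCosetSets_le.trans ?_
    rw [mul_assoc]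
    gcongr
    calc N ^ 2 ≤ N ^ (k + 2) := pow_le_pow_right₀ hN le_add_self
      _ ≤ 2 ^ 2 ^ k * N ^ (k + 2) := le_mul_of_one_le_left (by positivity) htwo
  have hone : 1 ≤ 2 ^ 2 ^ k * N ^ (k + 2) * X :=
    one_le_mul_of_one_le_of_one_le (one_le_mul_of_one_le_of_one_le htwo (one_le_pow₀ hN)) hX
  have hcover : (#(sumsetsAvoidingKernels G) : ℝ) ≤ _ :=
    Nat.cast_le.2 (card_sumsetsAvoidingKernels_le_add hk)
  push_cast at hcover
  calc (#(sumsetsAvoidingKernels G) : ℝ) ≤ 8 * (2 ^ 2 ^ k * N ^ (k + 2) * X) := by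
        linarith [hsmall id, hsmall fun F ↦ (popularSums (1 / 100000) F)ᶜ]
    _ = _ := by ring

end SumsetFamilies

section Asymptotics

open Filter Asymptotics

theorem eventually_mul_pow_le_two_rpow (C : ℝ) (k : ℕ) {δ : ℝ} (hδ : 0 < δ) :
    ∀ᶠ N : ℕ in atTop, C * (N : ℝ) ^ k ≤ 2 ^ (δ * N) := by
  have hpow := (isLittleO_pow_const_const_pow_of_one_lt (R := ℝ) k
    (Real.one_lt_rpow one_lt_two hδ)).const_mul_left C
  filter_upwards [hpow.bound one_pos] with N hN
  rw [one_mul, ← Real.rpow_natCast (2 ^ δ), ← Real.rpow_mul two_pos.le,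
    Real.norm_of_nonneg (Real.rpow_nonneg two_pos.le _)] at hN
  exact (le_abs_self _).trans hN

theorem eventually_two_rpow_half_le {δ : ℝ} (hδ : 0 < δ) :
    ∀ᶠ n : ℕ in atTop, (2 : ℝ) ^ (n / 2 : ℝ) ≤ δ * 2 ^ n := by
  have hlt : (2 : ℝ) ^ (1 / 2 : ℝ) < 2 := by
    simpa using Real.rpow_lt_rpow_of_exponent_lt one_lt_two (by norm_num : (1 / 2 : ℝ) < 1)
  filter_upwards [(isLittleO_pow_pow_of_lt_left (by positivity) hlt).bound hδ] with n hn
  rw [← Real.rpow_natCast (2 ^ (1 / 2 : ℝ)), ← Real.rpow_mul two_pos.le, one_div_mul_eq_div,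
    Real.norm_of_nonneg (by positivity), Real.norm_of_nonneg (by positivity)] at hn
  exact hn

theorem eventually_two_rpow_neg_mul_two_pow_le {δ ε : ℝ} (hδ : 0 < δ) (hε : 0 < ε) :
    ∀ᶠ n : ℕ in atTop, (2 : ℝ) ^ (-(δ * 2 ^ n)) ≤ ε := by
  have hexponent : Tendsto (fun n : ℕ ↦ -(δ * 2 ^ n)) atTop atBot :=
    tendsto_neg_atTop_atBot.comp
      ((tendsto_pow_atTop_atTop_of_one_lt one_lt_two).const_mul_atTop hδ)
  exact ((tendsto_rpow_atBot_of_base_gt_one 2 one_lt_two).comp hexponent).eventually_le_const hε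

end Asymptotics

section VectorSpace

open Filter

theorem exists_perp_eq_levelSet {n : ℕ} {ψ : AddChar (V n) ℂ} (hψ : ψ ≠ 0) :
    ∃ v : V n, v ≠ 0 ∧ perp v = levelSet ψ 1 := by
  set f : V n →+ ZMod 2 := AddMonoidHom.mk' (fun x ↦ if ψ x = 1 then 0 else 1) fun x y ↦ by
    rw [AddChar.map_add_eq_mul]
    rcases addChar_apply_eq_one_or_eq_neg_one ψ x with hx | hx <;>
      rcases addChar_apply_eq_one_or_eq_neg_one ψ y with hy | hy <;>
      norm_num [hx, hy, ZModModule.add_self]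
  obtain ⟨v, hv⟩ := (dotProductEquiv (ZMod 2) (Fin n)).surjective (f.toZModLinearMap 2)
  have hf (x : V n) : ∑ i, x i * v i = f x := by
    rw [← f.coe_toZModLinearMap 2, ← hv, dotProductEquiv_apply_apply, dotProduct_comm, dotProduct]
  have hperp : perp v = levelSet ψ 1 := by
    ext x
    simp [perp, mem_levelSet, hf, f]
  refine ⟨v, ?_, hperp⟩
  rintro rfl
  obtain ⟨x, hx⟩ := AddChar.ne_zero_iff.1 hψ
  have hmem : x ∈ levelSet ψ 1 := hperp ▸ by simp [perp]
  exact hx (by simpa [mem_levelSet] using hmem)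

theorem sumsets_sdiff_Hfam_subset (n : ℕ) :
    sumsets n \ Hfam n ⊆ sumsetsAvoidingKernels (V n) := by
  intro S hS
  obtain ⟨hsum, hperp⟩ := mem_sdiff.1 hS
  refine mem_filter.2 ⟨hsum, fun ψ hψ hker ↦ hperp ?_⟩
  obtain ⟨v, hv, hvψ⟩ := exists_perp_eq_levelSet hψ
  exact mem_filter.2 ⟨mem_univ S, v, hv, hvψ ▸ hker⟩

theorem two_rpow_le_card_sumsets {n : ℕ} (hn : n ≠ 0) :
    (2 : ℝ) ^ (2 ^ n / 2 : ℝ) ≤ #(sumsets n) := by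
  have : NeZero n := ⟨hn⟩
  obtain ⟨x, hx⟩ := exists_ne (0 : V n)
  obtain ⟨ψ, hψx⟩ := AddChar.exists_apply_ne_zero.2 hx
  have hψ : ψ ≠ 0 := AddChar.ne_zero_iff.2 ⟨x, hψx⟩
  have hcard : (2 ^ n / 2 : ℝ) = #(levelSet ψ (-1)) := by
    rw [card_levelSet hψ]
    simp [ZMod.card]
  rw [hcard, Real.rpow_natCast]
  exact_mod_cast two_pow_card_le_card_image_add_self (disjoint_levelSet_neg_one_add_self ψ)

theorem eventually_card_sumsets_sdiff_Hfam_le :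
    ∀ᶠ n : ℕ in atTop, (#(sumsets n \ Hfam n) : ℝ) ≤ 2 ^ ((1 / 2 - 1 / 5000) * 2 ^ n : ℝ) := by
  obtain ⟨k, hk⟩ := exists_nat_ge (1 / (1 / 100000 : ℝ) ^ 7)
  rw [div_le_iff₀ (by positivity)] at hk
  filter_upwards [(tendsto_pow_atTop_atTop_of_one_lt (one_lt_two (α := ℕ))).eventually
    (eventually_mul_pow_le_two_rpow (2 ^ (2 ^ k + 3)) (k + 2) (by norm_num : (0 : ℝ) < 1 / 10000))]
    with n hn
  have hcard : (Fintype.card (V n) : ℝ) = 2 ^ n := by simp [ZMod.card]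
  push_cast at hn
  calc (#(sumsets n \ Hfam n) : ℝ) ≤ #(sumsetsAvoidingKernels (V n)) :=
        mod_cast card_le_card (sumsets_sdiff_Hfam_subset n)
    _ ≤ 2 ^ (2 ^ k + 3) * (2 ^ n) ^ (k + 2) * 2 ^ ((1 / 2 - 3 / 10000) * 2 ^ n : ℝ) :=
        hcard ▸ card_sumsetsAvoidingKernels_le hk
    _ ≤ 2 ^ (1 / 10000 * 2 ^ n : ℝ) * 2 ^ ((1 / 2 - 3 / 10000) * 2 ^ n : ℝ) := by gcongr
    _ = 2 ^ ((1 / 2 - 1 / 5000) * 2 ^ n : ℝ) := by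
        rw [← Real.rpow_add two_pos]
        ring_nf

theorem count_sumsets_not_in_Hfam_general : ∃ δ : ℝ, 0 < δ ∧ ∀ᶠ n : ℕ in atTop,
    (#(sumsets n \ Hfam n) : ℝ) ≤ 2 ^ (((2 ^ (n - 1) : ℕ) : ℝ) - δ * 2 ^ n) ∧
    (#(sumsets n \ Hfam n) : ℝ) ≤ 2 ^ (-(δ * 2 ^ n)) * #(sumsets n) := by
  refine ⟨1 / 5000, by norm_num, ?_⟩
  filter_upwards [eventually_card_sumsets_sdiff_Hfam_le, eventually_ne_atTop 0] with n hcard hn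
  have hhalf : ((2 ^ (n - 1) : ℕ) : ℝ) = 2 ^ n / 2 := by
    rw [← pow_sub_one_mul hn]
    simp
  have hsplit : ((1 / 2 - 1 / 5000) * 2 ^ n : ℝ) = 2 ^ n / 2 - 1 / 5000 * 2 ^ n := by ring
  rw [hsplit] at hcard
  refine ⟨hhalf ▸ hcard, hcard.trans ?_⟩
  rw [sub_eq_neg_add, Real.rpow_add two_pos]
  gcongr
  exact two_rpow_le_card_sumsets hn

end VectorSpace

/-- There are `c > 0` and `n₀` with
`|𝒮ₙ \ ℋₙ| ≤ 2^(2^(n−1) − 2^(n/2 − c·√n))` for all `n ≥ n₀`; in particular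
`|𝒮ₙ \ ℋₙ| = o(|𝒮ₙ|)`. -/
theorem count_sumsets_not_in_Hfam :
    (∃ c : ℝ, 0 < c ∧ ∃ n₀ : ℕ, ∀ n : ℕ, n₀ ≤ n →
      (((sumsets n \ Hfam n).card : ℝ)) ≤
        2 ^ (((2 ^ (n - 1) : ℕ) : ℝ) - (2 : ℝ) ^ ((n : ℝ) / 2 - c * Real.sqrt n))) ∧
    (∀ ε : ℝ, 0 < ε → ∃ n₀ : ℕ, ∀ n : ℕ, n₀ ≤ n →
      (((sumsets n \ Hfam n).card : ℝ)) ≤ ε * (sumsets n).card) := by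
  obtain ⟨δ, hδ, hcount⟩ := count_sumsets_not_in_Hfam_general
  refine ⟨⟨1, one_pos, Filter.eventually_atTop.1 ?_⟩, fun ε hε ↦ Filter.eventually_atTop.1 ?_⟩
  · filter_upwards [hcount, eventually_two_rpow_half_le hδ] with n hn hexponent
    refine hn.1.trans (Real.rpow_le_rpow_of_exponent_le one_le_two (sub_le_sub_left ?_ _))
    refine le_trans (Real.rpow_le_rpow_of_exponent_le one_le_two ?_) hexponent
    linarith [Real.sqrt_nonneg n]
  · filter_upwards [hcount, eventually_two_rpow_neg_mul_two_pow_le hδ hε] with n hn hfactor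
    exact hn.2.trans (mul_le_mul_of_nonneg_right hfactor (Nat.cast_nonneg _))
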